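/- Bi-positivity of σ̄ (part of Proposition 5.2): each component yj of σ̄(x) (j=0,...,5), regarded as an element of the rational function field ℝ(x0,...,x5), can be written as a quotient g/h of two nonzero polynomials g,h ∈ ℝ[x0,...,x5] all of whose coefficients are nonnegative; and likewise each component xj of the inverse map σ̄^{-1}(y) (j=0,...,5), regarded as an element of ℝ(y0,...,y5), can be written as a quotient of two nonzero polynomials in y0,...,y5 with nonnegative coefficients. -/

import Mathlib

noncomputable section

def Xf1 (x0 x1 x2 x3 x4 x5 : ℝ) : ℝ :=
  1 + x3/x0 + x1*x3^2/(x0*x2^3) + 3*x1*x3*x4/(x0*x2^2) + 3*x1*x4^2/(x0*x2)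
    + x1*x4^3/(x0*x3) + (x1/x0 + x1*x3/x0^2)*x5

def Xf2 (x0 x1 x2 x3 x4 x5 : ℝ) : ℝ :=
  x2^3/x1^2 + x3^2/x2^3 + 3*x3*x4/x2^2 + 3*x4^2/x2 + x4^3/x3 + x5 + x3*x5/x0
    + (x0*x3*(2*x3 + 3*x2*x4) + x2^3*(x4^3 + x3*x5))/(x0*x1*x3)

def Mf (x0 x1 x2 x3 x4 x5 : ℝ) : ℝ :=
  x3*x4^2/(x0*x2) + 3*x4^3/x0 + x3*x5/(x2*x4) + x2*(3*x4^4/(x0*x3) + 3*x4*x5/x0)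
    + x2^2*(x4^2/(x0*x1) + x4^2/(x1*x3) + x4^5/(x0*x3^2) + x5/(x1*x4)
      + 2*x4^2*x5/(x0*x3) + x5^2/(x0*x4))

def Nf (x0 x1 x2 x3 x4 x5 : ℝ) : ℝ :=
  3*x1*x3/x2^3 + x2*x3/(x1*x4^2) + 2*x3^2/(x2^2*x4^2) + x1*x3^3/(x2^5*x4^2)
    + 3*x3/(x2*x4) + 3*x1*x3^2/(x2^4*x4) + x1*x4/x2^2 + x2*x4/x0
    + x1*x3*x5/(x2^2*x4^2) + x2*x3*x5/(x0*x4^2) + x1*x3^2*x5/(x0*x2^2*x4^2)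

def af (x0 x1 x2 x3 x4 x5 : ℝ) : ℝ := Mf x0 x1 x2 x3 x4 x5 / (x2*x4)^2

def sy2 (x0 x1 x2 x3 x4 x5 : ℝ) : ℝ := x2/x1 + x3/x2^2 + 2*x4/x2 + x4^2/x3 + x5/x4

def sy4 (x0 x1 x2 x3 x4 x5 : ℝ) : ℝ :=
  Mf x0 x1 x2 x3 x4 x5 / (sy2 x0 x1 x2 x3 x4 x5 * x2 * x4)

def sy0 (x0 x1 x2 x3 x4 x5 : ℝ) : ℝ := af x0 x1 x2 x3 x4 x5 * x0

def sy1 (x0 x1 x2 x3 x4 x5 : ℝ) : ℝ :=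
  (sy2 x0 x1 x2 x3 x4 x5)^3 * (af x0 x1 x2 x3 x4 x5 * Xf1 x0 x1 x2 x3 x4 x5
    + (sy4 x0 x1 x2 x3 x4 x5)^3) / (af x0 x1 x2 x3 x4 x5 * Xf2 x0 x1 x2 x3 x4 x5)

def sy3 (x0 x1 x2 x3 x4 x5 : ℝ) : ℝ :=
  af x0 x1 x2 x3 x4 x5 * Xf1 x0 x1 x2 x3 x4 x5 / sy1 x0 x1 x2 x3 x4 x5

def sy5 (x0 x1 x2 x3 x4 x5 : ℝ) : ℝ :=
  (x5 * Mf x0 x1 x2 x3 x4 x5 * Nf x0 x1 x2 x3 x4 x5 / (x1*x2*x3*x4))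
    / (af x0 x1 x2 x3 x4 x5 * Xf2 x0 x1 x2 x3 x4 x5
        * (sy3 x0 x1 x2 x3 x4 x5
            + sy1 x0 x1 x2 x3 x4 x5 * (sy3 x0 x1 x2 x3 x4 x5)^2 / (sy4 x0 x1 x2 x3 x4 x5)^3))

end

noncomputable section

def Ybar1 (y0 y1 y2 y3 y4 y5 : ℝ) : ℝ :=
  y0^2/(y1*y3) + y5 + y0*(1/y3 + y5/y1 + y3*y5/y4^3)

def Ybar2 (y0 y1 y2 y3 y4 y5 : ℝ) : ℝ :=
  1 + y0*(1/y1 + y1/(y2^3*y3) + 3*y4/(y2^2*y3) + 3*y4^2/(y1*y2*y3) + y4^3/(y1^2*y3))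
    + (y1/y2^3 + y3*(2/y1 + 3/(y2*y4)) + y0*y1*y3/(y2^3*y4^3) + y3^2/y4^3
        + 3*y4/y2^2 + 3*y4^2/(y1*y2) + y4^3/y1^2)*y5

def Ybar3 (y0 y1 y2 y3 y4 y5 : ℝ) : ℝ :=
  y2 + y0*(y2/y1 + y4/(y2*y3) + 2*y4^2/(y1*y3) + y2*y4^3/(y1^2*y3))
    + (y3*(2*y2/y1 + 2/y4) + y2*y3^2/y4^3 + y4/y2 + 2*y4^2/y1 + y2*y4^3/y1^2)*y5

def Pbar (y0 y1 y2 y3 y4 y5 : ℝ) : ℝ :=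
  y0 + y1 + y0*y1*y5/y2^3 + 2*y3*y5 + 2*y0*y3*y5/y1 + y0*y3^2*y5/y4^3
    + 2*y1*y3^2*y5/y4^3 + 3*y0*y3*y5/(y2*y4) + 3*y1*y3*y5/(y2*y4) + 3*y0*y4*y5/y2^2
    + 3*y0*y4^2*y5/(y1*y2) + y0*y4^3*y5/y1^2 + y1*y3*y5^2/y2^3 + 3*y3^2*y5^2/y1
    + y1*y3^4*y5^2/y4^6 + 3*y1*y3^3*y5^2/(y2*y4^4) + 3*y3^3*y5^2/y4^3
    + 3*y1*y3^2*y5^2/(y2^2*y4^2) + 6*y3^2*y5^2/(y2*y4) + 3*y3*y4*y5^2/y2^2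
    + 3*y3*y4^2*y5^2/(y1*y2) + y3*y4^3*y5^2/y1^2

def invx0 (y0 y1 y2 y3 y4 y5 : ℝ) : ℝ := Ybar1 y0 y1 y2 y3 y4 y5 / y0

def invx1 (y0 y1 y2 y3 y4 y5 : ℝ) : ℝ := Ybar2 y0 y1 y2 y3 y4 y5 / y0

def invx2 (y0 y1 y2 y3 y4 y5 : ℝ) : ℝ := Ybar3 y0 y1 y2 y3 y4 y5 / y0

def invx4 (y0 y1 y2 y3 y4 y5 : ℝ) : ℝ :=
  y2*y4*Ybar1 y0 y1 y2 y3 y4 y5 / (y0 * Ybar3 y0 y1 y2 y3 y4 y5)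

def invx3 (y0 y1 y2 y3 y4 y5 : ℝ) : ℝ :=
  Pbar y0 y1 y2 y3 y4 y5 * Ybar1 y0 y1 y2 y3 y4 y5 / (y0^2 * Ybar2 y0 y1 y2 y3 y4 y5)

def invx5 (y0 y1 y2 y3 y4 y5 : ℝ) : ℝ :=
  (y5 * Ybar1 y0 y1 y2 y3 y4 y5
      * (1 + y1/y0 + y3*y5/y0 + y1*y3*y5/y0^2 + y1*y3^2*y5/(y0*y4^3)))
    / (y0^2 * invx1 y0 y1 y2 y3 y4 y5 * invx3 y0 y1 y2 y3 y4 y5)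

end

noncomputable section

/-- the map `σ̄ : (x0,...,x5) ↦ (y0,...,y5)` -/
def sigVec (x : Fin 6 → ℝ) : Fin 6 → ℝ :=
  ![sy0 (x 0) (x 1) (x 2) (x 3) (x 4) (x 5),
    sy1 (x 0) (x 1) (x 2) (x 3) (x 4) (x 5),
    sy2 (x 0) (x 1) (x 2) (x 3) (x 4) (x 5),
    sy3 (x 0) (x 1) (x 2) (x 3) (x 4) (x 5),
    sy4 (x 0) (x 1) (x 2) (x 3) (x 4) (x 5),
    sy5 (x 0) (x 1) (x 2) (x 3) (x 4) (x 5)]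

end

noncomputable section

/-- the inverse map `σ̄⁻¹ : (y0,...,y5) ↦ (x0,...,x5)` -/
def invVec (y : Fin 6 → ℝ) : Fin 6 → ℝ :=
  ![invx0 (y 0) (y 1) (y 2) (y 3) (y 4) (y 5),
    invx1 (y 0) (y 1) (y 2) (y 3) (y 4) (y 5),
    invx2 (y 0) (y 1) (y 2) (y 3) (y 4) (y 5),
    invx3 (y 0) (y 1) (y 2) (y 3) (y 4) (y 5),
    invx4 (y 0) (y 1) (y 2) (y 3) (y 4) (y 5),
    invx5 (y 0) (y 1) (y 2) (y 3) (y 4) (y 5)]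

end

/-- A nonzero real polynomial all of whose coefficients are nonnegative. -/
def IsPositivePoly {ι : Type*} (p : MvPolynomial ι ℝ) : Prop :=
  p ≠ 0 ∧ ∀ d, 0 ≤ MvPolynomial.coeff d p

namespace IsPositivePoly

variable {ι : Type*} {p q : MvPolynomial ι ℝ}

theorem eval_pos (hp : IsPositivePoly p) {x : ι → ℝ} (hx : ∀ i, 0 < x i) :
    0 < MvPolynomial.eval x p := by
  rw [MvPolynomial.eval_eq]
  refine Finset.sum_pos (fun d hd => mul_pos ?_ (Finset.prod_pos fun i _ => pow_pos (hx i) _)) ?_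
  · exact lt_of_le_of_ne (hp.2 d) (Ne.symm (MvPolynomial.mem_support_iff.mp hd))
  · exact MvPolynomial.support_nonempty.mpr hp.1

theorem add (hp : IsPositivePoly p) (hq : IsPositivePoly q) : IsPositivePoly (p + q) := by
  refine ⟨fun h => ?_, fun d => ?_⟩
  · have hp1 := hp.eval_pos (x := fun _ => 1) fun _ => one_pos
    have hq1 := hq.eval_pos (x := fun _ => 1) fun _ => one_pos
    have h1 := congrArg (MvPolynomial.eval fun _ => (1 : ℝ)) h
    rw [map_add, map_zero] at h1
    linarith
  · rw [MvPolynomial.coeff_add]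
    exact add_nonneg (hp.2 d) (hq.2 d)

theorem mul (hp : IsPositivePoly p) (hq : IsPositivePoly q) : IsPositivePoly (p * q) := by
  classical
  refine ⟨mul_ne_zero hp.1 hq.1, fun d => ?_⟩
  rw [MvPolynomial.coeff_mul]
  exact Finset.sum_nonneg fun _ _ => mul_nonneg (hp.2 _) (hq.2 _)

theorem C {c : ℝ} (hc : 0 < c) : IsPositivePoly (MvPolynomial.C c : MvPolynomial ι ℝ) := by
  classical
  refine ⟨MvPolynomial.C_ne_zero.mpr hc.ne', fun d => ?_⟩
  rw [MvPolynomial.coeff_C]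
  split_ifs
  exacts [hc.le, le_rfl]

theorem X (i : ι) : IsPositivePoly (MvPolynomial.X i : MvPolynomial ι ℝ) := by
  classical
  refine ⟨MvPolynomial.X_ne_zero i, fun d => ?_⟩
  rw [MvPolynomial.coeff_X]
  split_ifs
  exacts [zero_le_one, le_rfl]

end IsPositivePoly

/-- A function which agrees on the positive orthant with a ratio of two nonzero polynomials
with nonnegative coefficients. -/
def IsPositiveRational {ι : Type*} (f : (ι → ℝ) → ℝ) : Prop :=
  ∃ g h : MvPolynomial ι ℝ, IsPositivePoly g ∧ IsPositivePoly h ∧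
    ∀ x : ι → ℝ, (∀ i, 0 < x i) → f x = MvPolynomial.eval x g / MvPolynomial.eval x h

namespace IsPositiveRational

variable {ι : Type*} {f₁ f₂ : (ι → ℝ) → ℝ}

theorem const {c : ℝ} (hc : 0 < c) : IsPositiveRational fun _ : ι → ℝ => c :=
  ⟨MvPolynomial.C c, MvPolynomial.C 1, .C hc, .C one_pos, fun x _ => by simp⟩

theorem coord (i : ι) : IsPositiveRational fun x : ι → ℝ => x i :=
  ⟨MvPolynomial.X i, MvPolynomial.C 1, .X i, .C one_pos, fun x _ => by simp⟩

theorem add (h₁ : IsPositiveRational f₁) (h₂ : IsPositiveRational f₂) :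
    IsPositiveRational fun x => f₁ x + f₂ x := by
  obtain ⟨p₁, q₁, hp₁, hq₁, e₁⟩ := h₁
  obtain ⟨p₂, q₂, hp₂, hq₂, e₂⟩ := h₂
  refine ⟨p₁ * q₂ + q₁ * p₂, q₁ * q₂, (hp₁.mul hq₂).add (hq₁.mul hp₂), hq₁.mul hq₂,
    fun x hx => ?_⟩
  beta_reduce
  rw [e₁ x hx, e₂ x hx, div_add_div _ _ (hq₁.eval_pos hx).ne' (hq₂.eval_pos hx).ne']
  simp only [map_add, map_mul]

theorem mul (h₁ : IsPositiveRational f₁) (h₂ : IsPositiveRational f₂) :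
    IsPositiveRational fun x => f₁ x * f₂ x := by
  obtain ⟨p₁, q₁, hp₁, hq₁, e₁⟩ := h₁
  obtain ⟨p₂, q₂, hp₂, hq₂, e₂⟩ := h₂
  refine ⟨p₁ * p₂, q₁ * q₂, hp₁.mul hp₂, hq₁.mul hq₂, fun x hx => ?_⟩
  beta_reduce
  rw [e₁ x hx, e₂ x hx, div_mul_div_comm, map_mul, map_mul]

theorem div (h₁ : IsPositiveRational f₁) (h₂ : IsPositiveRational f₂) :
    IsPositiveRational fun x => f₁ x / f₂ x := by
  obtain ⟨p₁, q₁, hp₁, hq₁, e₁⟩ := h₁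
  obtain ⟨p₂, q₂, hp₂, hq₂, e₂⟩ := h₂
  refine ⟨p₁ * q₂, q₁ * p₂, hp₁.mul hq₂, hq₁.mul hp₂, fun x hx => ?_⟩
  beta_reduce
  rw [e₁ x hx, e₂ x hx, div_div_div_eq, map_mul, map_mul]

theorem pow (h₁ : IsPositiveRational f₁) (n : ℕ) : IsPositiveRational fun x => f₁ x ^ n := by
  induction n with
  | zero => simpa only [pow_zero] using const one_pos
  | succ n ih => simpa only [pow_succ] using ih.mul h₁

end IsPositiveRational

open IsPositiveRational

theorem isPositiveRational_Xf1 :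
    IsPositiveRational fun x : Fin 6 → ℝ => Xf1 (x 0) (x 1) (x 2) (x 3) (x 4) (x 5) := by
  unfold Xf1
  apply_rules (maxDepth := 300) [coord, const, pow, div, mul, add] <;> norm_num

theorem isPositiveRational_Xf2 :
    IsPositiveRational fun x : Fin 6 → ℝ => Xf2 (x 0) (x 1) (x 2) (x 3) (x 4) (x 5) := by
  unfold Xf2
  apply_rules (maxDepth := 300) [coord, const, pow, div, mul, add] <;> norm_num

theorem isPositiveRational_Mf :
    IsPositiveRational fun x : Fin 6 → ℝ => Mf (x 0) (x 1) (x 2) (x 3) (x 4) (x 5) := by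
  unfold Mf
  apply_rules (maxDepth := 300) [coord, const, pow, div, mul, add] <;> norm_num

theorem isPositiveRational_Nf :
    IsPositiveRational fun x : Fin 6 → ℝ => Nf (x 0) (x 1) (x 2) (x 3) (x 4) (x 5) := by
  unfold Nf
  apply_rules (maxDepth := 300) [coord, const, pow, div, mul, add] <;> norm_num

theorem isPositiveRational_af :
    IsPositiveRational fun x : Fin 6 → ℝ => af (x 0) (x 1) (x 2) (x 3) (x 4) (x 5) := by
  unfold af
  apply_rules (maxDepth := 300) [isPositiveRational_Mf, coord, pow, div, mul, add]

theorem isPositiveRational_sy2 :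
    IsPositiveRational fun x : Fin 6 → ℝ => sy2 (x 0) (x 1) (x 2) (x 3) (x 4) (x 5) := by
  unfold sy2
  apply_rules (maxDepth := 300) [coord, const, pow, div, mul, add]
  norm_num

theorem isPositiveRational_sy4 :
    IsPositiveRational fun x : Fin 6 → ℝ => sy4 (x 0) (x 1) (x 2) (x 3) (x 4) (x 5) := by
  unfold sy4
  apply_rules (maxDepth := 300) [isPositiveRational_Mf, isPositiveRational_sy2, coord, pow, div,
    mul, add]

theorem isPositiveRational_sy0 :
    IsPositiveRational fun x : Fin 6 → ℝ => sy0 (x 0) (x 1) (x 2) (x 3) (x 4) (x 5) := by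
  unfold sy0
  apply_rules (maxDepth := 300) [isPositiveRational_af, coord, pow, div, mul, add]

theorem isPositiveRational_sy1 :
    IsPositiveRational fun x : Fin 6 → ℝ => sy1 (x 0) (x 1) (x 2) (x 3) (x 4) (x 5) := by
  unfold sy1
  apply_rules (maxDepth := 300) [isPositiveRational_af, isPositiveRational_sy2,
    isPositiveRational_sy4, isPositiveRational_Xf1, isPositiveRational_Xf2, coord, pow, div,
    mul, add]

theorem isPositiveRational_sy3 :
    IsPositiveRational fun x : Fin 6 → ℝ => sy3 (x 0) (x 1) (x 2) (x 3) (x 4) (x 5) := by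
  unfold sy3
  apply_rules (maxDepth := 300) [isPositiveRational_af, isPositiveRational_Xf1,
    isPositiveRational_sy1, coord, pow, div, mul, add]

theorem isPositiveRational_sy5 :
    IsPositiveRational fun x : Fin 6 → ℝ => sy5 (x 0) (x 1) (x 2) (x 3) (x 4) (x 5) := by
  unfold sy5
  apply_rules (maxDepth := 300) [isPositiveRational_Mf, isPositiveRational_Nf,
    isPositiveRational_af, isPositiveRational_Xf2, isPositiveRational_sy3,
    isPositiveRational_sy1, isPositiveRational_sy4, coord, pow, div, mul, add]

theorem isPositiveRational_Ybar1 :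
    IsPositiveRational fun x : Fin 6 → ℝ => Ybar1 (x 0) (x 1) (x 2) (x 3) (x 4) (x 5) := by
  unfold Ybar1
  apply_rules (maxDepth := 300) [coord, const, pow, div, mul, add]
  norm_num

theorem isPositiveRational_Ybar2 :
    IsPositiveRational fun x : Fin 6 → ℝ => Ybar2 (x 0) (x 1) (x 2) (x 3) (x 4) (x 5) := by
  unfold Ybar2
  apply_rules (maxDepth := 300) [coord, const, pow, div, mul, add] <;> norm_num

theorem isPositiveRational_Ybar3 :
    IsPositiveRational fun x : Fin 6 → ℝ => Ybar3 (x 0) (x 1) (x 2) (x 3) (x 4) (x 5) := by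
  unfold Ybar3
  apply_rules (maxDepth := 300) [coord, const, pow, div, mul, add] <;> norm_num

theorem isPositiveRational_Pbar :
    IsPositiveRational fun x : Fin 6 → ℝ => Pbar (x 0) (x 1) (x 2) (x 3) (x 4) (x 5) := by
  unfold Pbar
  apply_rules (maxDepth := 300) [coord, const, pow, div, mul, add] <;> norm_num

theorem isPositiveRational_invx0 :
    IsPositiveRational fun x : Fin 6 → ℝ => invx0 (x 0) (x 1) (x 2) (x 3) (x 4) (x 5) := by
  unfold invx0
  apply_rules (maxDepth := 300) [isPositiveRational_Ybar1, coord, pow, div, mul, add]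

theorem isPositiveRational_invx1 :
    IsPositiveRational fun x : Fin 6 → ℝ => invx1 (x 0) (x 1) (x 2) (x 3) (x 4) (x 5) := by
  unfold invx1
  apply_rules (maxDepth := 300) [isPositiveRational_Ybar2, coord, pow, div, mul, add]

theorem isPositiveRational_invx2 :
    IsPositiveRational fun x : Fin 6 → ℝ => invx2 (x 0) (x 1) (x 2) (x 3) (x 4) (x 5) := by
  unfold invx2
  apply_rules (maxDepth := 300) [isPositiveRational_Ybar3, coord, pow, div, mul, add]

theorem isPositiveRational_invx4 :
    IsPositiveRational fun x : Fin 6 → ℝ => invx4 (x 0) (x 1) (x 2) (x 3) (x 4) (x 5) := by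
  unfold invx4
  apply_rules (maxDepth := 300) [isPositiveRational_Ybar1, isPositiveRational_Ybar3, coord, pow,
    div, mul, add]

theorem isPositiveRational_invx3 :
    IsPositiveRational fun x : Fin 6 → ℝ => invx3 (x 0) (x 1) (x 2) (x 3) (x 4) (x 5) := by
  unfold invx3
  apply_rules (maxDepth := 300) [isPositiveRational_Pbar, isPositiveRational_Ybar1,
    isPositiveRational_Ybar2, coord, pow, div, mul, add]

theorem isPositiveRational_invx5 :
    IsPositiveRational fun x : Fin 6 → ℝ => invx5 (x 0) (x 1) (x 2) (x 3) (x 4) (x 5) := by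
  unfold invx5
  apply_rules (maxDepth := 300) [isPositiveRational_Ybar1, isPositiveRational_invx1,
    isPositiveRational_invx3, coord, const, pow, div, mul, add]
  norm_num

theorem IsPositiveRational.exists_ratio {ι : Type*} {f : (ι → ℝ) → ℝ}
    (hf : IsPositiveRational f) :
    ∃ g h : MvPolynomial ι ℝ, g ≠ 0 ∧ h ≠ 0 ∧
      (∀ d, 0 ≤ MvPolynomial.coeff d g) ∧ (∀ d, 0 ≤ MvPolynomial.coeff d h) ∧
      ∀ x : ι → ℝ, (∀ i, 0 < x i) →
        f x = MvPolynomial.eval x g / MvPolynomial.eval x h := by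
  obtain ⟨g, h, hg, hh, e⟩ := hf
  exact ⟨g, h, hg.1, hh.1, hg.2, hh.2, e⟩

/-- Bi-positivity of `σ̄`: every component of `σ̄` and of `σ̄⁻¹` is a ratio of two
nonzero polynomials with nonnegative coefficients. -/
theorem sigma_bipositive :
    (∀ j : Fin 6, ∃ g h : MvPolynomial (Fin 6) ℝ, g ≠ 0 ∧ h ≠ 0 ∧
      (∀ d, 0 ≤ MvPolynomial.coeff d g) ∧ (∀ d, 0 ≤ MvPolynomial.coeff d h) ∧
      ∀ x : Fin 6 → ℝ, (∀ i, 0 < x i) →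
        sigVec x j = MvPolynomial.eval x g / MvPolynomial.eval x h) ∧
    (∀ j : Fin 6, ∃ g h : MvPolynomial (Fin 6) ℝ, g ≠ 0 ∧ h ≠ 0 ∧
      (∀ d, 0 ≤ MvPolynomial.coeff d g) ∧ (∀ d, 0 ≤ MvPolynomial.coeff d h) ∧
      ∀ y : Fin 6 → ℝ, (∀ i, 0 < y i) →
        invVec y j = MvPolynomial.eval y g / MvPolynomial.eval y h) := by
  constructor
  · intro j
    fin_cases j
    exacts [isPositiveRational_sy0.exists_ratio,
      isPositiveRational_sy1.exists_ratio,
      isPositiveRational_sy2.exists_ratio,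
      isPositiveRational_sy3.exists_ratio,
      isPositiveRational_sy4.exists_ratio,
      isPositiveRational_sy5.exists_ratio]
  · intro j
    fin_cases j
    exacts [isPositiveRational_invx0.exists_ratio,
      isPositiveRational_invx1.exists_ratio,
      isPositiveRational_invx2.exists_ratio,
      isPositiveRational_invx3.exists_ratio,
      isPositiveRational_invx4.exists_ratio,
      isPositiveRational_invx5.exists_ratio]
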